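/- Let Λ ⊆ ℤ be relatively dense in ℝ (there exists R > 0 such that every interval of length R meets Λ), and suppose the measures γ_n defined by γ_n(f) = (1/(2n))·Σ_{x,y∈Λ∩[−n,n]} f(x−y) converge vaguely to a Radon measure γ, i.e., γ_n(f) → ∫ f dγ for every continuous compactly supported f : ℝ → ℂ. For each n ≥ 3 set Γ_n = n! + (Λ ∩ [−n, n]) and Γ = ∪_{n≥3} Γ_n (a disjoint union). Then: (a) card(Γ ∩ [−n, n])/(2n) → 0 as n → ∞; and (b) γ({0}) = lim_n card(Λ ∩ [−n,n])/(2n) > 0, and writing E_n = Γ ∩ [−n, n], for every continuous compactly supported f : ℝ → ℂ one has (1/card E_n)·Σ_{x,y∈E_n} f(x−y) → (1/γ({0}))·∫ f dγ as n → ∞; that is, the counting autocorrelation of Γ with respect to ([−n,n]) exists and equals (1/γ({0}))·γ. -/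

import Mathlib

open Filter Topology Set MeasureTheory

/-- The counting-normalised autocorrelation sum of the finite sample `F` applied to a
test function `f`; interpreted as `0` when `F = ∅`. -/
noncomputable def autoCorr (F : Set ℝ) (f : ℝ → ℂ) : ℂ :=
  ((F.ncard : ℂ))⁻¹ * ∑ᶠ x ∈ F, ∑ᶠ y ∈ F, f (x - y)

/-- `Γ = ⋃_{n ≥ 3} (n! + (Λ ∩ [−n, n]))`. -/
def shiftUnion (Λ : Set ℝ) : Set ℝ :=
  ⋃ n : ℕ, ⋃ (_ : 3 ≤ n),
    (fun x => ((Nat.factorial n : ℕ) : ℝ) + x) '' (Λ ∩ Set.Icc (-(n : ℝ)) (n : ℝ))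

open Classical in
/-- integer points of `X` in `[-n,n]` -/
noncomputable def finPart (X : Set ℝ) (n : ℕ) : Finset ℤ :=
  (Finset.Icc (-(n:ℤ)) (n:ℤ)).filter (fun z => (z:ℝ) ∈ X)

lemma mem_finPart {X : Set ℝ} {n : ℕ} {z : ℤ} :
    z ∈ finPart X n ↔ (-(n:ℤ) ≤ z ∧ z ≤ n) ∧ (z:ℝ) ∈ X := by
  simp [finPart]

lemma inter_eq (X : Set ℝ) (hZ : X ⊆ Set.range ((↑) : ℤ → ℝ)) (n : ℕ) :
    X ∩ Set.Icc (-(n:ℝ)) n = (fun z : ℤ => (z:ℝ)) '' (finPart X n : Set ℤ) := by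
  ext x
  constructor
  · rintro ⟨hx, h1, h2⟩
    obtain ⟨z, rfl⟩ := hZ hx
    refine ⟨z, ?_, rfl⟩
    rw [Finset.mem_coe, mem_finPart]
    exact ⟨⟨by exact_mod_cast h1, by exact_mod_cast h2⟩, hx⟩
  · rintro ⟨z, hz, rfl⟩
    rw [Finset.mem_coe, mem_finPart] at hz
    refine ⟨hz.2, ?_, ?_⟩
    · show -(n:ℝ) ≤ (z:ℝ)
      exact_mod_cast hz.1.1
    · show (z:ℝ) ≤ (n:ℝ)
      exact_mod_cast hz.1.2

/-- double sum -/
noncomputable def dsum (g : ℤ → ℂ) (S : Finset ℤ) : ℂ := ∑ x ∈ S, ∑ y ∈ S, g (x - y)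

lemma finsum_cast (S : Finset ℤ) (h : ℝ → ℂ) :
    ∑ᶠ x ∈ (fun z : ℤ => (z:ℝ)) '' (S : Set ℤ), h x = ∑ x ∈ S, h x := by
  rw [finsum_mem_image (Int.cast_injective.injOn), finsum_mem_coe_finset]

lemma finsum_eq (S : Finset ℤ) (f : ℝ → ℂ) :
    ∑ᶠ x ∈ (fun z : ℤ => (z:ℝ)) '' (S : Set ℤ), ∑ᶠ y ∈ (fun z : ℤ => (z:ℝ)) '' (S : Set ℤ),
      f (x - y) = dsum (fun z => f z) S := by
  rw [finsum_cast, dsum]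
  refine Finset.sum_congr rfl fun x _ => ?_
  rw [finsum_cast]
  simp

lemma ncard_eq (S : Finset ℤ) :
    ((fun z : ℤ => (z:ℝ)) '' (S : Set ℤ)).ncard = S.card := by
  rw [Set.ncard_image_of_injective _ Int.cast_injective, Set.ncard_coe_finset]

lemma supp_bound (f : ℝ → ℂ) (hf : HasCompactSupport f) :
    ∃ M : ℕ, ∀ z : ℤ, (M:ℤ) ≤ |z| → f z = 0 := by
  obtain ⟨r, hr⟩ := hf.isCompact.isBounded.subset_closedBall 0
  obtain ⟨M, hM⟩ := exists_nat_gt r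
  refine ⟨M, fun z hz => ?_⟩
  by_contra h
  have := hr (subset_tsupport f (Function.mem_support.2 h))
  rw [mem_closedBall_zero_iff, Real.norm_eq_abs] at this
  have h2 : (M:ℝ) ≤ |(z:ℝ)| := by exact_mod_cast hz
  linarith

lemma sum_bound (g : ℤ → ℂ) (M : ℕ) (hM : ∀ z : ℤ, (M:ℤ) ≤ |z| → g z = 0) :
    ∃ C : ℝ, 0 ≤ C ∧ ∀ S : Finset ℤ, ∑ z ∈ S, ‖g z‖ ≤ C := by
  have hs : Summable (fun z => ‖g z‖) := by
    apply summable_of_hasFiniteSupport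
    apply (Finset.Icc (-(M:ℤ)) M).finite_toSet.subset
    intro z hz
    by_contra h
    apply hz
    simp only [norm_eq_zero]
    apply hM
    by_contra h3
    push Not at h3
    apply h
    have := abs_lt.1 h3
    simp; omega
  exact ⟨∑' z, ‖g z‖, tsum_nonneg fun _ => norm_nonneg _,
    fun S => hs.sum_le_tsum S fun _ _ => norm_nonneg _⟩

lemma cross_bound (g : ℤ → ℂ) (C : ℝ) (hC : ∀ S : Finset ℤ, ∑ z ∈ S, ‖g z‖ ≤ C)
    (E F : Finset ℤ) : ‖∑ x ∈ F, ∑ y ∈ E, g (x - y)‖ ≤ C * F.card := by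
  refine (norm_sum_le _ _).trans ?_
  rw [mul_comm, ← nsmul_eq_mul]
  refine Finset.sum_le_card_nsmul _ _ _ fun x _ => (norm_sum_le _ _).trans ?_
  have := hC (E.image (fun y => x - y))
  rwa [Finset.sum_image (fun a _ b _ h => by simpa using h)] at this

lemma cross_bound' (g : ℤ → ℂ) (C : ℝ) (hC : ∀ S : Finset ℤ, ∑ z ∈ S, ‖g z‖ ≤ C)
    (E F : Finset ℤ) : ‖∑ x ∈ E, ∑ y ∈ F, g (x - y)‖ ≤ C * F.card := by
  rw [Finset.sum_comm]
  refine (norm_sum_le _ _).trans ?_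
  rw [mul_comm, ← nsmul_eq_mul]
  refine Finset.sum_le_card_nsmul _ _ _ fun x _ => (norm_sum_le _ _).trans ?_
  have := hC (E.image (fun y => y - x))
  rwa [Finset.sum_image (fun a _ b _ h => by simpa using h)] at this

lemma dsum_union (g : ℤ → ℂ) (E F : Finset ℤ) (h : Disjoint E F) :
    dsum g (E ∪ F) = dsum g E + dsum g F + (∑ x ∈ F, ∑ y ∈ E, g (x - y))
      + (∑ x ∈ E, ∑ y ∈ F, g (x - y)) := by
  simp only [dsum, Finset.sum_union h, Finset.sum_add_distrib]
  ring

lemma dsum_union_bound (g : ℤ → ℂ) (C : ℝ) (hC : ∀ S : Finset ℤ, ∑ z ∈ S, ‖g z‖ ≤ C)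
    (E F : Finset ℤ) (h : Disjoint E F) :
    ‖dsum g (E ∪ F) - dsum g E‖ ≤ 3 * C * F.card := by
  have e : dsum g (E ∪ F) - dsum g E = dsum g F + (∑ x ∈ F, ∑ y ∈ E, g (x - y))
      + (∑ x ∈ E, ∑ y ∈ F, g (x - y)) := by rw [dsum_union g E F h]; ring
  rw [e]
  have h1 := cross_bound g C hC F F
  have h2 := cross_bound g C hC E F
  have h3 := cross_bound' g C hC E F
  refine (norm_add₃_le).trans ?_
  rw [dsum]; linarith

lemma dsum_image_add (g : ℤ → ℂ) (a : ℤ) (S : Finset ℤ) :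
    dsum g (S.image (fun x => a + x)) = dsum g S := by
  simp only [dsum]
  rw [Finset.sum_image (fun a _ b _ h => by simpa using h)]
  refine Finset.sum_congr rfl fun x _ => ?_
  rw [Finset.sum_image (fun a _ b _ h => by simpa using h)]
  simp

/-- block -/
noncomputable def blk (Λ : Set ℝ) (k : ℕ) : Finset ℤ :=
  if 3 ≤ k then (finPart Λ k).image (fun x => (k.factorial : ℤ) + x) else ∅

/-- union of blocks -/
noncomputable def blkU (Λ : Set ℝ) (m : ℕ) : Finset ℤ := (Finset.range m).biUnion (blk Λ)

lemma fact_gap {j k : ℕ} (hj : 3 ≤ j) (hjk : j < k) :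
    j.factorial + j + 2 * k ≤ k.factorial := by
  induction k, hjk using Nat.le_induction with
  | base =>
    have : 6 ≤ j.factorial := Nat.factorial_le (m := 3) hj
    rw [Nat.succ_eq_add_one, Nat.factorial_succ]
    nlinarith
  | succ k hk ih =>
    rw [Nat.factorial_succ]
    have : 2 ≤ k.factorial := Nat.factorial_le (m := 2) (by omega)
    have h3 : 3 ≤ k := by omega
    nlinarith

lemma mem_blk {Λ : Set ℝ} {k : ℕ} {z : ℤ} (h : z ∈ blk Λ k) :
    3 ≤ k ∧ (k.factorial : ℤ) - k ≤ z ∧ z ≤ k.factorial + k := by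
  unfold blk at h
  split_ifs at h with hk
  · rw [Finset.mem_image] at h
    obtain ⟨x, hx, rfl⟩ := h
    rw [mem_finPart] at hx
    exact ⟨hk, by omega, by omega⟩
  · simp at h

lemma blk_gap {Λ : Set ℝ} {j k : ℕ} (hjk : j < k) {x y : ℤ} (hy : y ∈ blk Λ j)
    (hx : x ∈ blk Λ k) : (k:ℤ) ≤ x - y := by
  have h1 := mem_blk hy
  have h2 := mem_blk hx
  have := fact_gap h1.1 hjk
  zify at this
  omega

lemma blkU_gap {Λ : Set ℝ} {k : ℕ} {x y : ℤ} (hy : y ∈ blkU Λ k)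
    (hx : x ∈ blk Λ k) : (k:ℤ) ≤ x - y := by
  simp only [blkU, Finset.mem_biUnion, Finset.mem_range] at hy
  obtain ⟨j, hj, hy⟩ := hy
  exact blk_gap hj hy hx

lemma blkU_succ (Λ : Set ℝ) (k : ℕ) : blkU Λ (k+1) = blkU Λ k ∪ blk Λ k := by
  simp [blkU, Finset.range_add_one, Finset.biUnion_insert, Finset.union_comm]

lemma blkU_disj (Λ : Set ℝ) (k : ℕ) : Disjoint (blkU Λ k) (blk Λ k) := by
  rw [Finset.disjoint_left]
  intro x hx hx'
  have := blkU_gap hx hx'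
  have := (mem_blk hx').1
  omega

lemma card_blk (Λ : Set ℝ) {k : ℕ} (hk : 3 ≤ k) : (blk Λ k).card = (finPart Λ k).card := by
  rw [blk, if_pos hk, Finset.card_image_of_injective _ (add_right_injective _)]

lemma card_finPart_le (Λ : Set ℝ) (k : ℕ) : (finPart Λ k).card ≤ 2 * k + 1 := by
  classical
  have h : finPart Λ k ⊆ Finset.Icc (-(k:ℤ)) k := fun z hz => by
    rw [mem_finPart] at hz; simpa using hz.1
  refine (Finset.card_le_card h).trans ?_
  simp; omega

lemma card_blk_le (Λ : Set ℝ) (k : ℕ) : (blk Λ k).card ≤ 2 * k + 1 := by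
  by_cases hk : 3 ≤ k
  · rw [card_blk Λ hk]; exact card_finPart_le Λ k
  · simp [blk, hk]

lemma card_blkU_succ (Λ : Set ℝ) (k : ℕ) :
    (blkU Λ (k+1)).card = (blkU Λ k).card + (blk Λ k).card := by
  rw [blkU_succ, Finset.card_union_of_disjoint (blkU_disj Λ k)]

lemma card_blkU_le (Λ : Set ℝ) (k : ℕ) : (blkU Λ k).card ≤ k ^ 2 := by
  induction k with
  | zero => simp [blkU]
  | succ k ih =>
    rw [card_blkU_succ]
    have := card_blk_le Λ k
    nlinarith

lemma card_blkU (Λ : Set ℝ) (m : ℕ) :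
    (blkU Λ m).card = ∑ k ∈ Finset.range m, (blk Λ k).card := by
  induction m with
  | zero => simp [blkU]
  | succ k ih => rw [card_blkU_succ, ih, Finset.sum_range_succ]

lemma dsum_blkU_succ (Λ : Set ℝ) (g : ℤ → ℂ) (M : ℕ) (hM : ∀ z : ℤ, (M:ℤ) ≤ |z| → g z = 0)
    {k : ℕ} (hk : M ≤ k) (hk3 : 3 ≤ k) :
    dsum g (blkU Λ (k+1)) - dsum g (blkU Λ k) = dsum g (finPart Λ k) := by
  rw [blkU_succ, dsum_union g _ _ (blkU_disj Λ k)]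
  rw [Finset.sum_eq_zero (s := blk Λ k), Finset.sum_eq_zero (s := blkU Λ k)]
  · rw [blk, if_pos hk3, dsum_image_add]; ring
  · intro x hx
    refine Finset.sum_eq_zero fun y hy => hM _ ?_
    have := blkU_gap hx hy
    rw [abs_sub_comm]
    exact le_trans (by omega) (le_abs_self _)
  · intro x hx
    refine Finset.sum_eq_zero fun y hy => hM _ ?_
    have := blkU_gap hy hx
    exact le_trans (by omega) (le_abs_self _)

lemma shiftUnion_sub (Λ : Set ℝ) (hZ : Λ ⊆ Set.range ((↑) : ℤ → ℝ)) :
    shiftUnion Λ ⊆ Set.range ((↑) : ℤ → ℝ) := by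
  intro x hx
  simp only [shiftUnion, Set.mem_iUnion] at hx
  obtain ⟨n, _, y, hy, rfl⟩ := hx
  obtain ⟨z, rfl⟩ := hZ hy.1
  exact ⟨n.factorial + z, by push_cast; rfl⟩

lemma mem_shiftUnion (Λ : Set ℝ) (hZ : Λ ⊆ Set.range ((↑) : ℤ → ℝ)) (z : ℤ) :
    (z:ℝ) ∈ shiftUnion Λ ↔ ∃ k, z ∈ blk Λ k := by
  simp only [shiftUnion, Set.mem_iUnion]
  constructor
  · rintro ⟨k, hk, y, hy, e⟩
    refine ⟨k, ?_⟩
    rw [inter_eq Λ hZ] at hy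
    obtain ⟨w, hw, rfl⟩ := hy
    rw [blk, if_pos hk, Finset.mem_image]
    refine ⟨w, hw, ?_⟩
    simp only at e
    exact_mod_cast e
  · rintro ⟨k, hz⟩
    have hk := (mem_blk hz).1
    rw [blk, if_pos hk, Finset.mem_image] at hz
    obtain ⟨w, hw, rfl⟩ := hz
    refine ⟨k, hk, w, ?_, by push_cast; rfl⟩
    rw [inter_eq Λ hZ]
    exact ⟨w, hw, rfl⟩

lemma exists_idx (n : ℕ) : ∃ m : ℕ, n < m.factorial + m :=
  ⟨n, by have := Nat.factorial_pos n; omega⟩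

/-- index of the cut block -/
noncomputable def idx (n : ℕ) : ℕ := Nat.find (exists_idx n)

lemma idx_gt {n M : ℕ} (h : M.factorial + M ≤ n) : M < idx n := by
  rw [idx, Nat.lt_find_iff]
  intro k hk
  have := Nat.factorial_le hk
  omega

lemma idx_tendsto : Tendsto idx atTop atTop := by
  rw [tendsto_atTop]
  intro M
  filter_upwards [eventually_ge_atTop (M.factorial + M)] with n hn
  exact (idx_gt hn).le

lemma lt_idx {n k : ℕ} (h : k < idx n) : k.factorial + k ≤ n := by
  have := Nat.find_min (exists_idx n) h
  omega

lemma idx_spec (n : ℕ) : n < (idx n).factorial + idx n := Nat.find_spec (exists_idx n)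

lemma blkU_sub (Λ : Set ℝ) (hZ : Λ ⊆ Set.range ((↑) : ℤ → ℝ)) (n : ℕ) :
    blkU Λ (idx n) ⊆ finPart (shiftUnion Λ) n := by
  intro z hz
  simp only [blkU, Finset.mem_biUnion, Finset.mem_range] at hz
  obtain ⟨k, hk, hz⟩ := hz
  rw [mem_finPart, mem_shiftUnion Λ hZ]
  refine ⟨?_, k, hz⟩
  have := lt_idx hk
  have := mem_blk hz
  omega

lemma sub_blkU (Λ : Set ℝ) (hZ : Λ ⊆ Set.range ((↑) : ℤ → ℝ)) (n : ℕ) (h3 : 3 ≤ idx n) :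
    finPart (shiftUnion Λ) n ⊆ blkU Λ (idx n + 1) := by
  intro z hz
  rw [mem_finPart, mem_shiftUnion Λ hZ] at hz
  obtain ⟨h1, k, hk⟩ := hz
  simp only [blkU, Finset.mem_biUnion, Finset.mem_range]
  refine ⟨k, ?_, hk⟩
  by_contra hlt
  have := fact_gap h3 (show idx n < k by omega)
  have := idx_spec n
  have := mem_blk hk
  omega

lemma part_a (Λ : Set ℝ) (hZ : Λ ⊆ Set.range ((↑) : ℤ → ℝ)) :
    Tendsto (fun n : ℕ => ((finPart (shiftUnion Λ) n).card : ℝ) / (2 * n)) atTop (nhds 0) := by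
  have h1 : Tendsto (fun j : ℕ => 4 * ((3:ℝ) ^ j / j.factorial)) atTop (nhds 0) := by
    simpa using (FloorSemiring.tendsto_pow_div_factorial_atTop (3:ℝ)).const_mul 4
  have h2 : Tendsto (fun n => idx n - 1) atTop atTop := (tendsto_sub_atTop_nat 1).comp idx_tendsto
  refine squeeze_zero' (Eventually.of_forall fun n => by positivity) ?_ (h1.comp h2)
  filter_upwards [idx_tendsto.eventually_ge_atTop 3] with n hn
  obtain ⟨j, hj⟩ : ∃ j, idx n = j + 1 := ⟨idx n - 1, by omega⟩
  have a1 := (Finset.card_le_card (sub_blkU Λ hZ n hn)).trans (card_blkU_le Λ _)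
  have a2 : (j+2)^2 ≤ 4 * 3 ^ j := by
    clear a1 hj
    induction j with
    | zero => simp
    | succ j ih => rw [pow_succ 3]; nlinarith [Nat.zero_le (j * j)]
  have a3 := lt_idx (n := n) (k := j) (by omega)
  have hp := Nat.factorial_pos j
  simp only [Function.comp, hj, Nat.add_sub_cancel]
  rw [hj] at a1
  have a4 : ((finPart (shiftUnion Λ) n).card : ℝ) ≤ 4 * 3 ^ j := by exact_mod_cast a1.trans a2
  rw [← mul_div_assoc]
  refine div_le_div₀ (by positivity) a4 (by positivity) ?_
  have : (j.factorial : ℝ) + j ≤ n := by exact_mod_cast a3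
  have : (0:ℝ) ≤ j := by positivity
  have : (0:ℝ) ≤ n := by positivity
  linarith

/-- tent functions -/
noncomputable def tent (k : ℕ) (x : ℝ) : ℝ := max 0 (1 - (k+1) * |x|)

lemma tent_cont (k : ℕ) : Continuous (tent k) := by unfold tent; fun_prop

lemma tent_zero_of (k : ℕ) {x : ℝ} (h : 1 ≤ (k + 1) * |x|) : tent k x = 0 := by
  unfold tent
  exact max_eq_left (by linarith)

lemma tent_zero (k : ℕ) : tent k 0 = 1 := by simp [tent]

lemma tent_zero_of_one (k : ℕ) {x : ℝ} (h : 1 ≤ |x|) : tent k x = 0 := by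
  apply tent_zero_of
  have : (0:ℝ) ≤ k := by positivity
  nlinarith

lemma tent_supp (k : ℕ) : HasCompactSupport (fun x => (tent k x : ℂ)) := by
  apply HasCompactSupport.of_support_subset_isCompact (isCompact_Icc (a := (-1:ℝ)) (b := 1))
  intro x hx
  by_contra h
  apply hx
  have : 1 ≤ |x| := by
    by_contra h2
    push Not at h2
    have := abs_lt.1 h2
    exact h ⟨this.1.le, this.2.le⟩
  simp [tent_zero_of_one k this]

lemma dsum_tent (k : ℕ) (S : Finset ℤ) : dsum (fun z => (tent k z : ℂ)) S = S.card := by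
  have h : ∀ z : ℤ, (tent k z : ℂ) = if z = 0 then 1 else 0 := by
    intro z
    split_ifs with h
    · simp [h, tent_zero]
    · rw [tent_zero_of_one]
      · simp
      · exact_mod_cast Int.one_le_abs h
  unfold dsum
  have : ∀ x ∈ S, ∑ y ∈ S, (tent k ((x - y : ℤ) : ℝ) : ℂ) = 1 := by
    intro x hx
    simp only [h, sub_eq_zero]
    simp [hx]
  rw [Finset.sum_congr rfl this]
  simp

lemma tent_int (γ : Measure ℝ) [IsFiniteMeasureOnCompacts γ] :
    Tendsto (fun k : ℕ => ∫ x, (tent k x : ℂ) ∂γ) atTop (nhds ((γ {(0:ℝ)}).toReal : ℂ)) := by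
  have e : ((γ {(0:ℝ)}).toReal : ℂ) = ∫ x, ({(0:ℝ)} : Set ℝ).indicator (fun _ => (1:ℂ)) x ∂γ := by
    rw [integral_indicator_const _ (measurableSet_singleton _)]
    simp [Measure.real]
  rw [e]
  apply tendsto_integral_of_dominated_convergence
    ((Set.Icc (-1:ℝ) 1).indicator (fun _ => (1:ℝ)))
  · intro k
    exact (Complex.continuous_ofReal.comp (tent_cont k)).aestronglyMeasurable
  · rw [integrable_indicator_iff measurableSet_Icc]
    exact integrableOn_const isCompact_Icc.measure_lt_top.ne
  · intro k
    refine Eventually.of_forall fun x => ?_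
    rw [Complex.norm_real, Real.norm_eq_abs]
    by_cases h : 1 ≤ |x|
    · rw [tent_zero_of_one k h, abs_zero]
      exact Set.indicator_nonneg (fun _ _ => zero_le_one) _
    · push Not at h
      have := abs_lt.1 h
      have hm : x ∈ Set.Icc (-1:ℝ) 1 := ⟨this.1.le, this.2.le⟩
      rw [Set.indicator_of_mem hm, abs_le]
      have h2 : (0:ℝ) ≤ (k+1) * |x| := by positivity
      unfold tent
      constructor
      · linarith [le_max_left 0 (1 - (k+1) * |x|)]
      · exact max_le (by norm_num) (by linarith)
  · refine Eventually.of_forall fun x => ?_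
    by_cases h : x = 0
    · subst h; simp [tent_zero]
    · rw [Set.indicator_of_notMem (by simpa using h)]
      apply tendsto_const_nhds.congr'
      have hx : 0 < |x| := abs_pos.2 h
      filter_upwards [eventually_ge_atTop ⌈1/|x|⌉₊] with k hk
      rw [tent_zero_of, Complex.ofReal_zero]
      have h1 : 1 / |x| ≤ k := Nat.ceil_le.1 hk
      rw [div_le_iff₀ hx] at h1
      nlinarith

lemma dens_pos (Λ : Set ℝ) (hZ : Λ ⊆ Set.range ((↑) : ℤ → ℝ))
    (hrel : ∃ R : ℝ, 0 < R ∧ ∀ x : ℝ, ∃ y ∈ Λ, y ∈ Set.Icc x (x + R)) :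
    ∃ δ : ℝ, 0 < δ ∧ ∀ᶠ n : ℕ in atTop, δ ≤ ((finPart Λ n).card : ℝ) / (2 * n) := by
  obtain ⟨R, hR, h⟩ := hrel
  obtain ⟨W, hW⟩ := exists_nat_gt R
  have hW0 : 0 < W := by
    have : (0:ℝ) < W := hR.trans hW
    exact_mod_cast this
  have h' : ∀ j : ℕ, ∃ z : ℤ, (z:ℝ) ∈ Λ ∧ (j * W : ℤ) ≤ z ∧ z < (j + 1) * W := by
    intro j
    obtain ⟨y, hy, h1, h2⟩ := h (j * W)
    obtain ⟨z, rfl⟩ := hZ hy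
    refine ⟨z, hy, by exact_mod_cast h1, ?_⟩
    have : (z:ℝ) < (j + 1) * W := by linarith
    exact_mod_cast this
  choose y hy1 hy2 hy3 using h'
  have hlt : StrictMono y := strictMono_nat_of_lt_succ fun j => by
    have := hy2 (j+1)
    have := hy3 j
    push_cast at *
    linarith
  have key : ∀ n : ℕ, n / W ≤ (finPart Λ n).card := by
    intro n
    have hs : (Finset.range (n / W)).image y ⊆ finPart Λ n := by
      intro z hz
      rw [Finset.mem_image] at hz
      obtain ⟨j, hj, rfl⟩ := hz
      rw [Finset.mem_range] at hj
      rw [mem_finPart]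
      have h1 : (0:ℤ) ≤ j * W := by positivity
      have h2 : (j + 1) * W ≤ n := (Nat.mul_le_mul_right W hj).trans (Nat.div_mul_le_self n W)
      zify at h2
      have := hy2 j
      have := hy3 j
      exact ⟨⟨by omega, by omega⟩, hy1 j⟩
    have := Finset.card_le_card hs
    rwa [Finset.card_image_of_injective _ hlt.injective, Finset.card_range] at this
  refine ⟨1 / (4 * W), by positivity, ?_⟩
  filter_upwards [eventually_ge_atTop (2 * W)] with n hn
  have h1 : n < (n / W + 1) * W := by
    rw [mul_comm]; exact Nat.lt_mul_div_succ n hW0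
  have h2 : n ≤ 2 * W * (finPart Λ n).card := by
    have := Nat.mul_le_mul_left W (key n)
    nlinarith
  have h3 : (n:ℝ) ≤ 2 * W * (finPart Λ n).card := by exact_mod_cast h2
  have hn0 : (0:ℝ) < n := by
    have : 0 < n := by omega
    exact_mod_cast this
  have hw0 : (0:ℝ) < W := by exact_mod_cast hW0
  rw [div_le_div_iff₀ (by positivity) (by positivity)]
  linarith

open Asymptotics in
lemma main_lim (Λ : Set ℝ) (hZ : Λ ⊆ Set.range ((↑) : ℤ → ℝ)) (L : ℝ) (hL : 0 < L)
    (hc : Tendsto (fun n : ℕ => ((finPart Λ n).card : ℝ) / (2 * n)) atTop (nhds L))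
    (g : ℤ → ℂ) (M : ℕ) (hM : ∀ z : ℤ, (M:ℤ) ≤ |z| → g z = 0) (I : ℂ)
    (hI : Tendsto (fun n : ℕ => (((2 * n : ℝ)) : ℂ)⁻¹ * dsum g (finPart Λ n)) atTop (nhds I)) :
    Tendsto (fun n : ℕ => ((finPart (shiftUnion Λ) n).card : ℂ)⁻¹ *
      dsum g (finPart (shiftUnion Λ) n)) atTop (nhds ((L:ℂ)⁻¹ * I)) := by
  obtain ⟨C, hC0, hC⟩ := sum_bound g M hM
  set q : ℂ := (L:ℂ)⁻¹ * I with hq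
  -- linear growth of block sizes
  have hlin : ∀ᶠ k : ℕ in atTop, L * k ≤ ((blk Λ k).card : ℝ) := by
    filter_upwards [hc.eventually_const_lt (show L / 2 < L by linarith),
      eventually_ge_atTop 3] with k hk h3
    rw [card_blk Λ h3]
    have : (0:ℝ) < k := by
      have : 0 < k := by omega
      exact_mod_cast this
    rw [lt_div_iff₀ (by positivity)] at hk
    linarith
  have hlinO : (fun k : ℕ => (k:ℝ)) =O[atTop] (fun k => ((blk Λ k).card : ℝ)) := by
    apply IsBigO.of_bound (1/L)
    filter_upwards [hlin] with k hk
    rw [Real.norm_of_nonneg (by positivity), Real.norm_of_nonneg (by positivity),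
      one_div, inv_mul_eq_div, le_div_iff₀ hL]
    linarith
  have hct : Tendsto (fun k => ((blk Λ k).card : ℝ)) atTop atTop :=
    tendsto_atTop_mono' _ hlin (tendsto_natCast_atTop_atTop.const_mul_atTop hL)
  have hsum : ∀ m, ∑ k ∈ Finset.range m, ((blk Λ k).card : ℝ) = (blkU Λ m).card := by
    intro m; rw [card_blkU]; push_cast; rfl
  have hGt : Tendsto (fun m => ∑ k ∈ Finset.range m, ((blk Λ k).card : ℝ)) atTop atTop := by
    rw [← tendsto_add_atTop_iff_nat 1]
    refine tendsto_atTop_mono (fun m => ?_) hct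
    exact Finset.single_le_sum (f := fun k => ((blk Λ k).card : ℝ))
      (fun _ _ => by positivity) (Finset.self_mem_range_succ m)
  have hnn : (0 : ℕ → ℝ) ≤ fun k => ((blk Λ k).card : ℝ) := fun k => by simp
  -- d_k
  let D : ℕ → ℂ := fun m => dsum g (blkU Λ m) - q * (blkU Λ m).card
  have hd : (fun k => D (k+1) - D k) =o[atTop] (fun k => ((blk Λ k).card : ℝ)) := by
    refine IsLittleO.trans_isBigO ?_ hlinO
    have hcC : Tendsto (fun n : ℕ => (((2 * n : ℝ)) : ℂ)⁻¹ * ((finPart Λ n).card : ℂ)) atTop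
        (nhds (L:ℂ)) := by
      have := (Complex.continuous_ofReal.tendsto L).comp hc
      refine this.congr fun n => ?_
      simp only [Function.comp]
      push_cast
      rw [div_eq_inv_mul]
    have h0 := hI.sub (hcC.const_mul q)
    have hLC : (L:ℂ) ≠ 0 := by exact_mod_cast hL.ne'
    have hz : I - q * L = 0 := by rw [hq]; field_simp; ring
    rw [hz] at h0
    have h1 : (fun k : ℕ => dsum g (finPart Λ k) - q * (finPart Λ k).card)
        =o[atTop] (fun k : ℕ => (k:ℝ)) := by
      rw [isLittleO_iff]
      intro c hcp
      have h2 := h0.norm.eventually_lt_const (show ‖(0:ℂ)‖ < c / 2 by simpa using hcp)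
      filter_upwards [h2, eventually_ge_atTop 1] with k hk hk1
      have hk0 : (0:ℝ) < k := by exact_mod_cast hk1
      have e : (((2 * k : ℝ)) : ℂ)⁻¹ * dsum g (finPart Λ k) -
          q * ((((2 * k : ℝ)) : ℂ)⁻¹ * ((finPart Λ k).card : ℂ)) =
          (((2 * k : ℝ)) : ℂ)⁻¹ * (dsum g (finPart Λ k) - q * (finPart Λ k).card) := by ring
      rw [e, norm_mul, norm_inv, Complex.norm_real, Real.norm_of_nonneg (by positivity),
        inv_mul_eq_div, div_lt_iff₀ (by positivity)] at hk
      rw [Real.norm_of_nonneg hk0.le]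
      linarith
    refine h1.congr' ?_ EventuallyEq.rfl
    filter_upwards [eventually_ge_atTop M, eventually_ge_atTop 3] with k hk hk3
    rw [← dsum_blkU_succ Λ g M hM hk hk3, ← card_blk Λ hk3]
    simp only [D, card_blkU_succ]
    push_cast
    ring
  have hD : D =o[atTop] (fun m => ((blkU Λ m).card : ℝ)) := by
    have := hd.sum_range hnn hGt
    simp only [hsum, Finset.sum_range_sub] at this
    have hD0 : D 0 = 0 := by simp [D, blkU, dsum]
    simpa [hD0] using this
  have hone : (fun _ : ℕ => (1:ℝ)) =o[atTop] (fun k => ((blk Λ k).card : ℝ)) := by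
    rw [isLittleO_const_left]
    right
    exact tendsto_norm_atTop_atTop.comp hct
  have hid : (fun m : ℕ => (m:ℝ)) =o[atTop] (fun m => ((blkU Λ m).card : ℝ)) := by
    have := hone.sum_range hnn hGt
    simpa [hsum] using this
  have hblk : (fun m => ((blk Λ m).card : ℝ)) =o[atTop] (fun m => ((blkU Λ m).card : ℝ)) := by
    refine IsBigO.trans_isLittleO ?_ hid
    apply IsBigO.of_bound 3
    filter_upwards [eventually_ge_atTop 1] with m hm
    rw [Real.norm_of_nonneg (by positivity), Real.norm_of_nonneg (by positivity)]
    have := card_blk_le Λ m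
    have : (blk Λ m).card ≤ 3 * m := by omega
    exact_mod_cast this
  -- transfer
  have hD' := hD.comp_tendsto idx_tendsto
  have hb' := hblk.comp_tendsto idx_tendsto
  have hGE : (fun n => ((blkU Λ (idx n)).card : ℝ)) =O[atTop]
      (fun n => ((finPart (shiftUnion Λ) n).card : ℝ)) := by
    apply IsBigO.of_bound 1
    refine Eventually.of_forall fun n => ?_
    rw [Real.norm_of_nonneg (by positivity), Real.norm_of_nonneg (by positivity), one_mul]
    exact_mod_cast Finset.card_le_card (blkU_sub Λ hZ n)
  have hfin : (fun n => dsum g (finPart (shiftUnion Λ) n) - q * (finPart (shiftUnion Λ) n).card)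
      =o[atTop] (fun n => ((finPart (shiftUnion Λ) n).card : ℝ)) := by
    have h1 : (fun n => (dsum g (finPart (shiftUnion Λ) n)
        - q * (finPart (shiftUnion Λ) n).card) - D (idx n)) =O[atTop]
        (fun n => ((blk Λ (idx n)).card : ℝ)) := by
      apply IsBigO.of_bound (3 * C + ‖q‖)
      filter_upwards [idx_tendsto.eventually_ge_atTop 3] with n hn
      set E := finPart (shiftUnion Λ) n
      set G := blkU Λ (idx n)
      have hGE : G ⊆ E := blkU_sub Λ hZ n
      have hF : E \ G ⊆ blk Λ (idx n) := by
        intro z hz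
        rw [Finset.mem_sdiff] at hz
        have := sub_blkU Λ hZ n hn hz.1
        rw [blkU_succ, Finset.mem_union] at this
        exact this.resolve_left hz.2
      have hdj : Disjoint G (E \ G) := Finset.disjoint_sdiff
      have hU : G ∪ (E \ G) = E := Finset.union_sdiff_of_subset hGE
      have hcard : E.card = G.card + (E \ G).card := by
        rw [← Finset.card_union_of_disjoint hdj, hU]
      have hb := dsum_union_bound g C hC G (E \ G) hdj
      rw [hU] at hb
      have hFc : ((E \ G).card : ℝ) ≤ (blk Λ (idx n)).card := by
        exact_mod_cast Finset.card_le_card hF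
      have e : dsum g E - q * E.card - D (idx n) = (dsum g E - dsum g G) - q * (E \ G).card := by
        simp only [D, hcard]; push_cast; ring
      rw [e, Real.norm_of_nonneg (by positivity)]
      refine (norm_sub_le _ _).trans ?_
      rw [norm_mul, Complex.norm_natCast, add_mul]
      gcongr
      exact hb.trans (by gcongr)
    have h2 := (h1.trans_isLittleO hb').add hD'
    refine (h2.congr_left fun n => ?_).trans_isBigO hGE
    simp [Function.comp]
  have hEt : Tendsto (fun n => ((finPart (shiftUnion Λ) n).card : ℝ)) atTop atTop := by
    simp only [hsum] at hGt
    refine tendsto_atTop_mono (fun n => ?_) (hGt.comp idx_tendsto)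
    simp only [Function.comp]
    exact_mod_cast Finset.card_le_card (blkU_sub Λ hZ n)
  have hfin2 : Tendsto (fun n => ((finPart (shiftUnion Λ) n).card : ℂ)⁻¹ *
      (dsum g (finPart (shiftUnion Λ) n) - q * (finPart (shiftUnion Λ) n).card)) atTop (nhds 0) := by
    rw [tendsto_zero_iff_norm_tendsto_zero]
    have := hfin.norm_left.tendsto_div_nhds_zero
    refine this.congr fun n => ?_
    rw [norm_mul, norm_inv, Complex.norm_natCast, div_eq_inv_mul]
  have := hfin2.add_const q
  rw [zero_add] at this
  refine this.congr' ?_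
  filter_upwards [hEt.eventually_gt_atTop 0] with n hn
  have : ((finPart (shiftUnion Λ) n).card : ℂ) ≠ 0 := by exact_mod_cast hn.ne'
  field_simp
  ring

theorem zero_density_set_with_prescribed_counting_diffraction
    (Λ : Set ℝ) (hZ : Λ ⊆ Set.range ((↑) : ℤ → ℝ))
    (hrel : ∃ R : ℝ, 0 < R ∧ ∀ x : ℝ, ∃ y ∈ Λ, y ∈ Set.Icc x (x + R))
    (γ : Measure ℝ) [IsFiniteMeasureOnCompacts γ]
    (hconv : ∀ f : ℝ → ℂ, Continuous f → HasCompactSupport f →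
      Tendsto (fun n : ℕ => (((2 * n : ℝ)) : ℂ)⁻¹ *
          ∑ᶠ x ∈ Λ ∩ Set.Icc (-(n : ℝ)) (n : ℝ),
            ∑ᶠ y ∈ Λ ∩ Set.Icc (-(n : ℝ)) (n : ℝ), f (x - y))
        atTop (nhds (∫ x, f x ∂γ))) :
    (Tendsto (fun n : ℕ => ((shiftUnion Λ ∩ Set.Icc (-(n : ℝ)) (n : ℝ)).ncard : ℝ) /
        (2 * n)) atTop (nhds 0)) ∧
    (Tendsto (fun n : ℕ => ((Λ ∩ Set.Icc (-(n : ℝ)) (n : ℝ)).ncard : ℝ) / (2 * n))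
        atTop (nhds (γ {(0 : ℝ)}).toReal)) ∧
    0 < (γ {(0 : ℝ)}).toReal ∧
    (∀ f : ℝ → ℂ, Continuous f → HasCompactSupport f →
      Tendsto (fun n : ℕ => autoCorr (shiftUnion Λ ∩ Set.Icc (-(n : ℝ)) (n : ℝ)) f)
        atTop (nhds ((((γ {(0 : ℝ)}).toReal : ℂ))⁻¹ * ∫ x, f x ∂γ))) := by
  have hZ' := shiftUnion_sub Λ hZ
  simp only [autoCorr, inter_eq Λ hZ, inter_eq _ hZ', finsum_eq, ncard_eq] at hconv ⊢
  have hcC : ∀ k : ℕ, Tendsto (fun n : ℕ => (((2 * n : ℝ)) : ℂ)⁻¹ * ((finPart Λ n).card : ℂ)) atTop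
      (nhds (∫ x, (tent k x : ℂ) ∂γ)) := by
    intro k
    have := hconv (fun x => (tent k x : ℂ)) (Complex.continuous_ofReal.comp (tent_cont k))
      (tent_supp k)
    simpa only [dsum_tent] using this
  have hconst : ∀ k : ℕ, ∫ x, (tent k x : ℂ) ∂γ = ∫ x, (tent 0 x : ℂ) ∂γ :=
    fun k => tendsto_nhds_unique (hcC k) (hcC 0)
  have h0 : ∫ x, (tent 0 x : ℂ) ∂γ = ((γ {(0:ℝ)}).toReal : ℂ) := by
    have := tent_int γ
    simp only [hconst] at this
    exact tendsto_nhds_unique tendsto_const_nhds this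
  have hc : Tendsto (fun n : ℕ => ((finPart Λ n).card : ℝ) / (2 * n)) atTop
      (nhds (γ {(0:ℝ)}).toReal) := by
    have h1 := hcC 0
    rw [h0] at h1
    have h2 := (Complex.continuous_re.tendsto _).comp h1
    rw [Complex.ofReal_re] at h2
    refine h2.congr fun n => ?_
    have e : (((2 * n : ℝ)) : ℂ)⁻¹ * ((finPart Λ n).card : ℂ) =
        ((((finPart Λ n).card : ℝ) / (2 * n) : ℝ) : ℂ) := by
      push_cast
      rw [div_eq_inv_mul]
    simp only [Function.comp]
    rw [e, Complex.ofReal_re]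
  have hpos : 0 < (γ {(0:ℝ)}).toReal := by
    obtain ⟨δ, hδ, h⟩ := dens_pos Λ hZ hrel
    exact hδ.trans_le (ge_of_tendsto hc h)
  refine ⟨part_a Λ hZ, hc, hpos, fun f hf hfs => ?_⟩
  obtain ⟨M, hM⟩ := supp_bound f hfs
  exact main_lim Λ hZ _ hpos hc (fun z => f z) M hM _ (hconv f hf hfs)
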